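/- arXiv:1312.2097 — 12 statements merged into one kernel-verified Lean document; each statement's English description precedes it below -/
import Mathlib

section
/- Let k be an algebraically closed field of characteristic zero, n ≥ 1, and ζ ∈ k a primitive n-th root of unity. Let ω : (ZMod n)³ → kˣ be any map satisfying the 3-cocycle identity ω(b,c,d) · ω(a, b+c, d) · ω(a,b,c) = ω(a, b, c+d) · ω(a+b, c, d) for all a,b,c,d ∈ ZMod n, and normalized in the sense that ω(a,b,c) = 1 whenever a = 0, b = 0 or c = 0. Then there exist i ∈ {0, …, n−1} and a map α : (ZMod n)² → kˣ with α(0,b) = α(a,0) = 1 for all a,b, such that for all a,b,c ∈ ZMod n: ω(a,b,c) = ζ^{i · val(a) · [val(b) + val(c) ≥ n]} · α(b,c) · α(a+b, c)⁻¹ · α(a, b+c) · α(a,b)⁻¹. -/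
/-- Proposition 5.1 (pro:KCn): every normalized 3-cocycle on the cyclic group
`C_n = ZMod n` with values in `kˣ` equals a standard cocycle `ω_{ζ^i}` twisted by the
coboundary of a normalized 2-cochain `α`. -/
theorem normalized_three_cocycle_eq_standard_mul_coboundary
    {k : Type*} [Field k] [IsAlgClosed k] [CharZero k]
    (n : ℕ) (hn : 1 ≤ n) (ζ : kˣ) (hζ : IsPrimitiveRoot ζ n)
    (ω : ZMod n → ZMod n → ZMod n → kˣ)
    (hcoc : ∀ a b c d : ZMod n,
      ω b c d * ω a (b + c) d * ω a b c = ω a b (c + d) * ω (a + b) c d)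
    (hnorm : ∀ a b c : ZMod n, (a = 0 ∨ b = 0 ∨ c = 0) → ω a b c = 1) :
    ∃ (i : ℕ) (α : ZMod n → ZMod n → kˣ),
      i < n ∧
      (∀ b : ZMod n, α 0 b = 1) ∧ (∀ a : ZMod n, α a 0 = 1) ∧
      ∀ a b c : ZMod n,
        ω a b c =
          ζ ^ (i * a.val * (if n ≤ b.val + c.val then 1 else 0)) *
            (α b c * (α (a + b) c)⁻¹ * α a (b + c) * (α a b)⁻¹) := by
  have : NeZero n := ⟨by omega⟩
  let A : ZMod n → ℕ → kˣ := fun a j => ∏ t ∈ Finset.range j, ω a (t : ZMod n) 1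
  have A0 : ∀ a, A a 0 = 1 := fun a => by simp [A]
  have As : ∀ a j, A a (j + 1) = A a j * ω a (j : ZMod n) 1 := fun a j => by
    simp [A, Finset.prod_range_succ]
  have Az : ∀ j, A 0 j = 1 := fun j => by
    simp only [A]
    exact Finset.prod_eq_one fun t _ => hnorm _ _ _ (Or.inl rfl)
  have key : ∀ (a : ZMod n) (b c : ℕ),
      ω a b c * (A a b * A (a + b) c) = A b c * A a (b + c) := by
    intro a b c
    induction c with
    | zero => simp [A0, hnorm]
    | succ c ih =>
      have h := hcoc a b c 1
      rw [← add_assoc, As, As, As]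
      push_cast
      calc ω a b (c + 1) * (A a b * (A (a + b) c * ω (a + b) c 1))
          = (ω a b (c + 1) * ω (a + b) c 1) * (A a b * A (a + b) c) := by
            simp only [mul_assoc, mul_comm, mul_left_comm]
        _ = (ω b c 1 * ω a (b + c) 1) * (ω a b c * (A a b * A (a + b) c)) := by
            rw [← h]; simp only [mul_assoc]
        _ = _ := by rw [ih]; simp only [mul_assoc, mul_comm, mul_left_comm]
  have per : ∀ a j, A a (j + n) = A a j * A a n := by
    intro a j
    induction j with
    | zero => simp [A0]
    | succ j ih =>
      rw [show j + 1 + n = (j + n) + 1 by ring, As, As, ih]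
      simp only [Nat.cast_add, CharP.cast_eq_zero, add_zero]
      exact mul_right_comm _ _ _
  have hom : ∀ (a : ZMod n) (b : ℕ), A (a + b) n = A b n * A a n := by
    intro a b
    have h := key a b n
    rw [per, hnorm a b _ (Or.inr (Or.inr (by simp))), one_mul, mul_left_comm] at h
    exact mul_left_cancel h
  have gpow : ∀ m : ℕ, A (m : ZMod n) n = A 1 n ^ m := by
    intro m
    induction m with
    | zero => simp [Az]
    | succ m ih =>
      have h := hom 1 m
      rw [add_comm, ih] at h
      rw [pow_succ, ← h]; push_cast; rfl
  have g1 : A 1 n ^ n = 1 := by rw [← gpow]; simp [Az]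
  obtain ⟨i, hi, hg⟩ := (IsPrimitiveRoot.coe_units_iff.mpr hζ).eq_pow_of_pow_eq_one
    (ξ := ((A 1 n : kˣ) : k)) (by rw [← Units.val_pow_eq_pow_val, g1, Units.val_one])
  have hg' : ζ ^ i = A 1 n := Units.ext (by exact_mod_cast hg)
  refine ⟨i, fun a b => A a b.val, hi, fun b => Az _, fun a => by simp [A0], ?_⟩
  intro a b c
  have h := key a b.val c.val
  have ha := gpow a.val
  simp only [ZMod.natCast_val, ZMod.cast_id', id_eq] at h ha
  have hcarry : A a (b.val + c.val) =
      A a (b + c).val * ζ ^ (i * a.val * (if n ≤ b.val + c.val then 1 else 0)) := by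
    split_ifs with hle
    · rw [mul_one, pow_mul, hg', ← ha, ← per, ZMod.val_add_val_of_le hle]
    · rw [ZMod.val_add_of_lt (by omega)]; simp
  rw [hcarry] at h
  rw [eq_mul_inv_of_mul_eq h, mul_inv]
  simp only [mul_assoc, mul_comm, mul_left_comm]
end

section
/- Let k be an algebraically closed field of characteristic zero, n ≥ 2, ζ ∈ k a primitive n-th root of unity, and 1 ≤ i ≤ n−1. Then there is NO map v : (ZMod n)² → kˣ such that for all a,b,c ∈ ZMod n: ζ^{i · val(a) · [val(b) + val(c) ≥ n]} = v(b,c) · v(a+b, c)⁻¹ · v(a, b+c) · v(a,b)⁻¹. In other words, the 3-cocycle ω_{ζ^i} on the cyclic group ZMod n with values in kˣ is not a coboundary. -/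
/-- Corollary 5.3 (cor: not quasi iso to trivial): for `1 ≤ i ≤ n-1`, the 3-cocycle
`ω_{ζ^i}` on `ZMod n` with values in `kˣ` is not a coboundary. -/
theorem standard_three_cocycle_not_coboundary
    {k : Type*} [Field k] [IsAlgClosed k] [CharZero k]
    (n : ℕ) (hn : 2 ≤ n) (ζ : kˣ) (hζ : IsPrimitiveRoot ζ n)
    (i : ℕ) (hi1 : 1 ≤ i) (hi2 : i ≤ n - 1) :
    ¬ ∃ v : ZMod n → ZMod n → kˣ,
        ∀ a b c : ZMod n,
          ζ ^ (i * a.val * (if n ≤ b.val + c.val then 1 else 0)) =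
            v b c * (v (a + b) c)⁻¹ * v a (b + c) * (v a b)⁻¹ := by
  rintro ⟨v, hv⟩
  obtain ⟨m, rfl⟩ : ∃ m, n = m + 1 := ⟨n - 1, by omega⟩
  haveI : Fact (1 < m + 1) := ⟨by omega⟩
  have h1 : (1 : ZMod (m + 1)).val = 1 := ZMod.val_one _
  -- the product over `b` of `ω(1, b, 1)` telescopes on the coboundary side
  have key : ∏ b : ZMod (m + 1),
      ζ ^ (i * (1 : ZMod (m + 1)).val *
        (if m + 1 ≤ b.val + (1 : ZMod (m + 1)).val then 1 else 0)) = 1 := by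
    rw [Finset.prod_congr rfl (fun b _ => hv 1 b 1)]
    simp only [Finset.prod_mul_distrib, Finset.prod_inv_distrib]
    have e1 : ∏ b : ZMod (m + 1), v (1 + b) 1 = ∏ b : ZMod (m + 1), v b 1 :=
      Equiv.prod_comp (Equiv.addLeft (1 : ZMod (m + 1))) (fun b => v b 1)
    have e2 : ∏ b : ZMod (m + 1), v 1 (b + 1) = ∏ b : ZMod (m + 1), v 1 b :=
      Equiv.prod_comp (Equiv.addRight (1 : ZMod (m + 1))) (fun b => v 1 b)
    rw [e1, e2]
    simp
  rw [Finset.prod_eq_single (-1 : ZMod (m + 1))] at key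
  · rw [h1, ZMod.val_neg_one, if_pos le_rfl, mul_one, mul_one] at key
    have := Nat.le_of_dvd hi1 (hζ.dvd_of_pow_eq_one i key)
    omega
  · intro b _ hb
    rw [h1, if_neg, mul_zero, pow_zero]
    intro h
    apply hb
    apply ZMod.val_injective
    rw [ZMod.val_neg_one]
    have := ZMod.val_lt b
    omega
  · intro h
    exact absurd (Finset.mem_univ _) h
end

section
/- Let k be a field, G a group (written multiplicatively), g ∈ G, ω : G × G × G → kˣ, and χ : G → k with χ(1) = 1. Assume the quasi-YD product formula: χ(h·l) = ω(h,l,g)⁻¹ · χ(l) · ω(h,g,l) · χ(h) · ω(g,h,l)⁻¹ for all h, l ∈ G. Assume moreover that for every h ∈ G, either χ(h) = 0 or g·h = h·g. Then: (a) χ(h) ≠ 0 for every h ∈ G, and (b) g lies in the center of G. -/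
/-- Lemma 3.6 (lem:group): a quasi-Yetter–Drinfeld datum on a group algebra `kG`
forces `χ` to be nowhere zero and `g` to be central. -/
theorem quasiYD_group_datum_central {k : Type*} [Field k] {G : Type*} [Group G]
    (g : G) (ω : G → G → G → kˣ) (χ : G → k) (hχ1 : χ 1 = 1)
    (hprod : ∀ h l : G, χ (h * l) =
      ((ω h l g : k))⁻¹ * χ l * (ω h g l : k) * χ h * ((ω g h l : k))⁻¹)
    (hcomm : ∀ h : G, χ h = 0 ∨ g * h = h * g) :
    (∀ h : G, χ h ≠ 0) ∧ (∀ h : G, g * h = h * g) := by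
  have key : ∀ h : G, χ h ≠ 0 := by
    intro h h0
    have e := hprod h h⁻¹
    rw [mul_inv_cancel, hχ1, h0, mul_zero, zero_mul] at e
    exact one_ne_zero e
  exact ⟨key, fun h => (hcomm h).resolve_left (key h)⟩
end

section
/- Let k be a field, G a group (written multiplicatively), g, c ∈ G, ω : G × G × G → kˣ, and χ : G → k with χ(1) = 1, satisfying the quasi-YD product formula: χ(h·l) = ω(h,l,g)⁻¹ · χ(l) · ω(h,g,l) · χ(h) · ω(g,h,l)⁻¹ for all h, l ∈ G. Then for every integer t ≥ 1: χ(c^t) = χ(c)^t · ∏_{i=0}^{t−1} [ ω(c^i, c, g)⁻¹ · ω(c^i, g, c) · ω(g, c^i, c)⁻¹ ]. In particular, taking c = g: χ(g^t) = χ(g)^t · ∏_{i=0}^{t−1} ω(g, g^i, g)⁻¹. -/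
/-- Lemma 3.9 (lem:ChiCyclic): the value of `χ` on powers of a grouplike element,
formulas (3.5) and (3.6) of the paper. -/
theorem quasiYD_chi_on_powers {k : Type*} [Field k] {G : Type*} [Group G]
    (g c : G) (ω : G → G → G → kˣ) (χ : G → k) (hχ1 : χ 1 = 1)
    (hprod : ∀ h l : G, χ (h * l) =
      ((ω h l g : k))⁻¹ * χ l * (ω h g l : k) * χ h * ((ω g h l : k))⁻¹) :
    (∀ t : ℕ, 1 ≤ t →
      χ (c ^ t) = χ c ^ t *
        ∏ i ∈ Finset.range t,
          (((ω (c ^ i) c g : k))⁻¹ * (ω (c ^ i) g c : k) * ((ω g (c ^ i) c : k))⁻¹)) ∧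
    (∀ t : ℕ, 1 ≤ t →
      χ (g ^ t) = χ g ^ t * ∏ i ∈ Finset.range t, ((ω g (g ^ i) g : k))⁻¹) := by
  have key : ∀ (d : G) (t : ℕ), χ (d ^ t) = χ d ^ t *
        ∏ i ∈ Finset.range t,
          (((ω (d ^ i) d g : k))⁻¹ * (ω (d ^ i) g d : k) * ((ω g (d ^ i) d : k))⁻¹) := by
    intro d t
    induction t with
    | zero => simp [hχ1]
    | succ n ih =>
      rw [pow_succ d n, hprod, ih, Finset.prod_range_succ, pow_succ (χ d) n]
      ring
  refine ⟨fun t _ => key c t, fun t _ => ?_⟩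
  rw [key g t]
  congr 1
  refine Finset.prod_congr rfl fun i _ => ?_
  rw [inv_mul_cancel₀ (Units.ne_zero _), one_mul]
end

section
/- Let k be a field, n ≥ 2, q ∈ k a primitive n²-th root of unity, ζ := q^n, and 0 ≤ w ≤ n−1. Define ω_{ζ^w} : (ZMod n)³ → kˣ by ω_{ζ^w}(a,b,c) = ζ^{w · val(a) · [val(b) + val(c) ≥ n]}. Let z ∈ ZMod n and χ : ZMod n → k. Then the following are equivalent: (1) χ(0) = 1 and for all a, b ∈ ZMod n: χ(a+b) = ω_{ζ^w}(a,b,z)⁻¹ · χ(b) · ω_{ζ^w}(a,z,b) · χ(a) · ω_{ζ^w}(z,a,b)⁻¹; (2) χ(t) = χ(1)^{val(t)} for all t ∈ ZMod n, and χ(1)^n = ζ^{w · val(z)}. -/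
/-- The standard 3-cocycle `ω_{ζ^w}(a,b,c) = ζ^{w·val(a)·[val(b)+val(c) ≥ n]}` on
`ZMod n` with values in `kˣ`. -/
def omegaZetaW {k : Type*} [Field k] {n : ℕ} (ζ : kˣ) (w : ℕ) (a b c : ZMod n) : kˣ :=
  ζ ^ (w * a.val * (if n ≤ b.val + c.val then 1 else 0))

/-- Proposition 6.2 (pro:speriamo): characterization of quasi-Yetter–Drinfeld data for
`(kC_n, ω_{ζ^w})`: the quasi-YD product formula for `(ω_{ζ^w}, z, χ)` holds iff
`χ(t) = χ(1)^{val t}` for all `t` and `χ(1)^n = ζ^{w·val(z)}`. -/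
theorem quasiYD_datum_cyclic_characterization {k : Type*} [Field k]
    (n : ℕ) (hn : 2 ≤ n) (q : kˣ) (hq : IsPrimitiveRoot q (n ^ 2))
    (w : ℕ) (hw : w ≤ n - 1) (z : ZMod n) (χ : ZMod n → k) :
    (χ 0 = 1 ∧ ∀ a b : ZMod n,
        χ (a + b) =
          ((omegaZetaW (q ^ n) w a b z : k))⁻¹ * χ b * (omegaZetaW (q ^ n) w a z b : k) *
            χ a * ((omegaZetaW (q ^ n) w z a b : k))⁻¹)
    ↔ ((∀ t : ZMod n, χ t = χ 1 ^ t.val) ∧ χ 1 ^ n = ((q ^ n : kˣ) : k) ^ (w * z.val)) := by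
  have : NeZero n := ⟨by omega⟩
  have : Fact (1 < n) := ⟨by omega⟩
  have h1v : (1 : ZMod n).val = 1 := ZMod.val_one n
  generalize q ^ n = ζ
  have key : ∀ a b : ZMod n,
      ((omegaZetaW ζ w a b z : k))⁻¹ * χ b * (omegaZetaW ζ w a z b : k) *
            χ a * ((omegaZetaW ζ w z a b : k))⁻¹ =
      χ a * χ b * ((omegaZetaW ζ w z a b : k))⁻¹ := by
    intro a b
    have hs : omegaZetaW ζ w a z b = omegaZetaW ζ w a b z := by
      unfold omegaZetaW
      rw [add_comm z.val]
    rw [hs]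
    have h0 : ((omegaZetaW ζ w a b z : kˣ) : k) ≠ 0 := Units.ne_zero _
    generalize ((omegaZetaW ζ w z a b : kˣ) : k)⁻¹ = y
    field_simp
  have hlt : ∀ a b : ZMod n, a.val + b.val < n → omegaZetaW ζ w z a b = 1 := by
    intro a b h
    simp [omegaZetaW, Nat.not_le.mpr h]
  have hge : ∀ a b : ZMod n, n ≤ a.val + b.val →
      ((omegaZetaW ζ w z a b : kˣ) : k) = (ζ : k) ^ (w * z.val) := by
    intro a b h
    simp [omegaZetaW, h]
  have hζ : (ζ : k) ^ (w * z.val) ≠ 0 := pow_ne_zero _ (Units.ne_zero _)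
  simp only [key]
  constructor
  · rintro ⟨h0, h⟩
    have hm : ∀ m : ℕ, m < n → χ (m : ZMod n) = χ 1 ^ m := by
      intro m
      induction m with
      | zero => intro _; simpa using h0
      | succ m ih =>
        intro hmn
        have hv : (m : ZMod n).val = m := ZMod.val_natCast_of_lt (by omega)
        push_cast
        rw [h, hlt _ _ (by rw [hv, h1v]; exact hmn), ih (by omega)]
        simp [pow_succ]
    refine ⟨fun t => ?_, ?_⟩
    · have := hm t.val (ZMod.val_lt t)
      rwa [ZMod.natCast_zmod_val] at this
    · have hv : ((n - 1 : ℕ) : ZMod n).val = n - 1 := ZMod.val_natCast_of_lt (by omega)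
      have h2 := h ((n - 1 : ℕ) : ZMod n) 1
      have h3 : ((n - 1 : ℕ) : ZMod n) + 1 = 0 := by
        have : ((n - 1 + 1 : ℕ) : ZMod n) = 0 := by
          rw [Nat.sub_add_cancel (by omega)]; simp
        simpa only [Nat.cast_add, Nat.cast_one] using this
      rw [h3, h0, hge _ _ (by rw [hv, h1v]; omega), hm _ (by omega), ← pow_succ,
        Nat.sub_add_cancel (by omega)] at h2
      field_simp at h2
      exact h2.symm
  · rintro ⟨ht, hc⟩
    refine ⟨by rw [ht 0]; simp, fun a b => ?_⟩
    rw [ht (a + b), ht a, ht b, ← pow_add]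
    rcases lt_or_ge (a.val + b.val) n with h | h
    · rw [hlt _ _ h, ZMod.val_add_of_lt h]
      simp
    · rw [hge _ _ h, ZMod.val_add_val_of_le h, pow_add, hc]
      field_simp
end

section
/- Let k be a field, G a group (written multiplicatively), ω : G × G × G → kˣ, and v : G × G → kˣ. Define ω^v : G × G × G → kˣ by ω^v(g,h,l) := v(h,l) · v(g, h·l) · ω(g,h,l) · v(g·h, l)⁻¹ · v(g,h)⁻¹. Assume ω(h, 1, l) = 1 for all h, l ∈ G, and assume ω^v(h, 1, l) = 1 for all h, l ∈ G. Then, setting a := v(1,1)⁻¹, one has a · v(h, 1) = 1 and a · v(1, h) = 1 for all h ∈ G; equivalently, v(h,1) = v(1,h) = v(1,1) for all h ∈ G. -/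
/-- Lemma 2.2 (lm: normalize to a gauge trans), group-algebra case: if the twisted
reassociator `ω^v(g,h,l) = v(h,l)·v(g,hl)·ω(g,h,l)·v(gh,l)⁻¹·v(g,h)⁻¹` is normalized
(and `ω` itself is normalized in the middle slot), then `a·v` with `a = v(1,1)⁻¹` is a
gauge transformation. -/
theorem normalize_to_gauge_transformation {k : Type*} [Field k] {G : Type*} [Group G]
    (ω : G → G → G → kˣ) (v : G → G → kˣ)
    (hω : ∀ h l : G, ω h 1 l = 1)
    (hωv : ∀ h l : G,
      v 1 l * v h (1 * l) * ω h 1 l * (v (h * 1) l)⁻¹ * (v h 1)⁻¹ = 1) :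
    ∀ h : G, (v 1 1)⁻¹ * v h 1 = 1 ∧ (v 1 1)⁻¹ * v 1 h = 1 := by
  have key : ∀ h l : G, v 1 l = v h 1 := by
    intro h l
    have e := hωv h l
    rw [hω, one_mul, mul_one, mul_one, mul_inv_cancel_right] at e
    exact mul_inv_eq_one.mp e
  intro h
  constructor
  · rw [← key h 1, inv_mul_cancel]
  · rw [key 1 h, inv_mul_cancel]
end

section
/- Let k be a field, n ≥ 2, q ∈ k a primitive n²-th root of unity, ζ := q^n, and 0 ≤ i ≤ n−1. Define v : (ZMod n²)² → k by v(a,b) := q^{i · val(a) · (val(b) − (val(b) mod n))}, where val(x) ∈ {0, …, n²−1} is the canonical representative of x ∈ ZMod n². Then for all a, b, c ∈ ZMod n²: ζ^{i · (val(a) mod n) · [(val(b) mod n) + (val(c) mod n) ≥ n]} = v(b,c) · v(a+b, c)⁻¹ · v(a, b+c) · v(a,b)⁻¹. -/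
/-- The 2-cochain `v_i(a,b) = q^{i·val(a)·(val(b) − val(b) mod n)}` on `ZMod n²`. -/
def vCochain {k : Type*} [Field k] (n : ℕ) (q : k) (i : ℕ) (a b : ZMod (n ^ 2)) : k :=
  q ^ (i * a.val * (b.val - b.val % n))

/-- End of Section 5.1 of the paper: the pullback of the cocycle `ω_{ζ^i}` on `ZMod n`
along the projection `ZMod n² → ZMod n` is the coboundary of `v_i`. -/
theorem pullback_cocycle_is_coboundary {k : Type*} [Field k]
    (n : ℕ) (hn : 2 ≤ n) (q : k) (hq : IsPrimitiveRoot q (n ^ 2))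
    (i : ℕ) (hi : i ≤ n - 1) :
    ∀ a b c : ZMod (n ^ 2),
      (q ^ n) ^ (i * (a.val % n) * (if n ≤ b.val % n + c.val % n then 1 else 0)) =
        vCochain n q i b c * (vCochain n q i (a + b) c)⁻¹ * vCochain n q i a (b + c) *
          (vCochain n q i a b)⁻¹ := by
  intro a b c
  have hq0 : q ≠ 0 := hq.ne_zero (by positivity)
  have : NeZero (n ^ 2) := ⟨by positivity⟩
  have key : (q ^ n) ^ (i * (a.val % n) * (if n ≤ b.val % n + c.val % n then 1 else 0)) *
      vCochain n q i (a + b) c * vCochain n q i a b =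
      vCochain n q i b c * vCochain n q i a (b + c) := by
    unfold vCochain
    rw [← pow_mul, ← pow_add, ← pow_add, ← pow_add]
    generalize he : (if n ≤ b.val % n + c.val % n then 1 else 0) = e
    have hmod : (b + c).val % n + n * e = b.val % n + c.val % n := by
      rw [ZMod.val_add, Nat.mod_mod_of_dvd _ (Dvd.intro_left _ (by ring : n * n = n ^ 2)),
        Nat.add_mod_eq_ite, ← he]
      split_ifs <;> omega
    have hpow : ∀ x y : ℕ, (x : ZMod (n ^ 2)) = y → q ^ x = q ^ y := by
      intro x y hxy
      have h := (ZMod.natCast_eq_natCast_iff _ _ _).1 hxy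
      rw [hq.eq_orderOf] at h
      rw [← pow_mod_orderOf q x, ← pow_mod_orderOf q y, h]
    apply hpow
    have hn2 : (n : ZMod (n ^ 2)) * n = 0 := by
      have := ZMod.natCast_self (n ^ 2)
      push_cast at this
      rw [← this]; ring
    have ha : ((a.val % n : ℕ) : ZMod (n ^ 2)) + n * ((a.val / n : ℕ) : ZMod (n ^ 2)) = a := by
      conv_rhs => rw [← ZMod.natCast_zmod_val a]
      exact_mod_cast congrArg _ (Nat.mod_add_div a.val n)
    have hm := congrArg (Nat.cast : ℕ → ZMod (n ^ 2)) hmod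
    push_cast at hm
    rw [Nat.cast_add, Nat.cast_add, Nat.cast_add]
    simp only [Nat.cast_mul, Nat.cast_sub (Nat.mod_le _ _), ZMod.natCast_zmod_val]
    linear_combination (i : ZMod (n ^ 2)) * e * n * ha - (i : ZMod (n ^ 2)) * e * ((a.val / n : ℕ) : ZMod (n ^ 2)) * hn2 + (i : ZMod (n ^ 2)) * a * hm
  have h1 : vCochain n q i (a + b) c ≠ 0 := pow_ne_zero _ hq0
  have h2 : vCochain n q i a b ≠ 0 := pow_ne_zero _ hq0
  generalize (q ^ n) ^ (i * (a.val % n) * (if n ≤ b.val % n + c.val % n then 1 else 0)) = L at *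
  field_simp
  linear_combination key
end

section
/- Let k be a field, G a group (written multiplicatively), g, c ∈ G, ω : G × G × G → kˣ, and χ : G → k with χ(1) = 1, satisfying the quasi-YD product formula: χ(h·l) = ω(h,l,g)⁻¹ · χ(l) · ω(h,g,l) · χ(h) · ω(g,h,l)⁻¹ for all h, l ∈ G. Assume in addition that ω is symmetric in its last two arguments: ω(x,y,z) = ω(x,z,y) for all x,y,z ∈ G. Then for every integer t ≥ 1: χ(c^t) = χ(c)^t · ∏_{i=0}^{t−1} ω(g, c^i, c)⁻¹. -/
/-- Remark 3.10 (rem: datum short), formula (3.7): simplification of Lemma 3.9 when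
the reassociator `ω` is symmetric in its last two arguments. -/
theorem quasiYD_chi_on_powers_symm {k : Type*} [Field k] {G : Type*} [Group G]
    (g c : G) (ω : G → G → G → kˣ) (χ : G → k) (hχ1 : χ 1 = 1)
    (hprod : ∀ h l : G, χ (h * l) =
      ((ω h l g : k))⁻¹ * χ l * (ω h g l : k) * χ h * ((ω g h l : k))⁻¹)
    (hsymm : ∀ x y z : G, ω x y z = ω x z y) :
    ∀ t : ℕ, 1 ≤ t →
      χ (c ^ t) = χ c ^ t * ∏ i ∈ Finset.range t, ((ω g (c ^ i) c : k))⁻¹ := by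
  intro t _
  induction t with
  | zero => simp [hχ1]
  | succ n ih =>
    have ih' : χ (c ^ n) = χ c ^ n * ∏ i ∈ Finset.range n, ((ω g (c ^ i) c : k))⁻¹ := by
      rcases Nat.eq_zero_or_pos n with h | h
      · subst h
        simp [hχ1]
      · exact ih h
    have hne : (ω (c ^ n) g c : k) ≠ 0 := Units.ne_zero _
    rw [pow_succ c n, hprod, hsymm (c ^ n) c g, ih', Finset.prod_range_succ, pow_succ (χ c) n]
    generalize (∏ i ∈ Finset.range n, ((ω g (c ^ i) c : k))⁻¹) = P
    generalize ((ω g (c ^ n) c : k))⁻¹ = Q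
    field_simp
end

section
/- Let k be a field, G a group (written multiplicatively), g ∈ G, ω : G × G × G → kˣ, and χ : G → k. Define functions χ_{[n]} : G → k recursively by χ_{[0]}(h) := 1 and, for n ≥ 1, χ_{[n]}(h) := ω(h, g, g^{n−1}) · χ(h) · ω(g, h, g^{n−1})⁻¹ · χ_{[n−1]}(h) · ω(g, g^{n−1}, h). Then for every n ≥ 1 and every h ∈ G: χ_{[n]}(h) = [ ∏_{i=0}^{n−1} ω(h, g, g^{n−1−i}) · χ(h) · ω(g, h, g^{n−1−i})⁻¹ ] · [ ∏_{i=0}^{n−1} ω(g, g^i, h) ]. In particular, χ_{[n]}(g) = χ(g)^n · ∏_{i=0}^{n−1} ω(g, g^i, g). -/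
/-- The iteratively defined functionals `χ_{[n]}` of formula (4.5) of the paper,
evaluated on group elements: `χ_{[0]} = 1` and
`χ_{[n]}(h) = ω(h,g,g^{n-1}) · χ(h) · ω(g,h,g^{n-1})⁻¹ · χ_{[n-1]}(h) · ω(g,g^{n-1},h)`. -/
def chiIter {k : Type*} [Field k] {G : Type*} [Group G]
    (g : G) (ω : G → G → G → kˣ) (χ : G → k) : ℕ → G → k
  | 0, _ => 1
  | n + 1, h =>
      (ω h g (g ^ n) : k) * χ h * ((ω g h (g ^ n) : k))⁻¹ * chiIter g ω χ n h *
        (ω g (g ^ n) h : k)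

/-- Formulas (4.6) and (4.7) of Proposition 4.3 (prop: structure of T(V)):
the closed form for `χ_{[n]}`, together with the special value `χ_{[n]}(g)`. -/
theorem chiIter_closed_form {k : Type*} [Field k] {G : Type*} [Group G]
    (g : G) (ω : G → G → G → kˣ) (χ : G → k) :
    (∀ n : ℕ, 1 ≤ n → ∀ h : G,
      chiIter g ω χ n h =
        (∏ i ∈ Finset.range n,
          ((ω h g (g ^ (n - 1 - i)) : k) * χ h * ((ω g h (g ^ (n - 1 - i)) : k))⁻¹)) *
          ∏ i ∈ Finset.range n, (ω g (g ^ i) h : k)) ∧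
    (∀ n : ℕ, 1 ≤ n →
      chiIter g ω χ n g = χ g ^ n * ∏ i ∈ Finset.range n, (ω g (g ^ i) g : k)) := by
  have key : ∀ (n : ℕ) (h : G), chiIter g ω χ n h =
      (∏ i ∈ Finset.range n,
        ((ω h g (g ^ i) : k) * χ h * ((ω g h (g ^ i) : k))⁻¹)) *
        ∏ i ∈ Finset.range n, (ω g (g ^ i) h : k) := by
    intro n h
    induction n with
    | zero => simp [chiIter]
    | succ n ih =>
      rw [chiIter, ih, Finset.prod_range_succ, Finset.prod_range_succ]
      ring
  refine ⟨fun n _ h => ?_, fun n _ => ?_⟩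
  · rw [key, Finset.prod_range_reflect
      (fun i => (ω h g (g ^ i) : k) * χ h * ((ω g h (g ^ i) : k))⁻¹) n]
  · rw [key]
    congr 1
    rw [Finset.prod_congr rfl (g := fun _ => χ g), Finset.prod_const, Finset.card_range]
    intro i _
    have := (ω g g (g ^ i)).ne_zero
    field_simp
end

section
/- Let k be a field, p an odd prime, q ∈ k a primitive 16-th root of unity, and ζ := q⁴. Let G be the dicyclic group of order 4p (Mathlib's QuaternionGroup p), with elements a(i) and xa(i) for i ∈ ZMod 2p, where a(i)·a(j) = a(i+j) and the element a(1) has order 2p. Then: (a) the assignment π(a(i)) := 2·ι(i), π(xa(i)) := 2·ι(i) + 1, where ι : ZMod 2p → ZMod 4 is induced by i ↦ i (well-defined on doubles since p is odd), is a group homomorphism π : G → ZMod 4; (b) the element z := a(1)^p satisfies π(z) = 2 and z lies in the center of G; (c) defining ω : (ZMod 4)³ → kˣ by ω(a,b,c) := ζ^{val(a)·[val(b)+val(c) ≥ 4]} and χ : ZMod 4 → k by χ(t) := q^{2·val(t)}, the function χ_G := χ ∘ π satisfies χ_G(1) = 1 and the quasi-YD product formula: for all h, l ∈ G, χ_G(h·l)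 = ω(π(h), π(l), 2)⁻¹ · χ_G(l) · ω(π(h), 2, π(l)) · χ_G(h) · ω(2, π(h), π(l))⁻¹. -/
/-- The projection `π : Dic_p → ZMod 4`, `π(a(i)) = 2·i`, `π(xa(i)) = 2·i + 1`,
from Example 6.5 of the paper (Mathlib's `QuaternionGroup p` is the dicyclic group
of order `4p`). -/
def dicProj (p : ℕ) : QuaternionGroup p → ZMod 4
  | QuaternionGroup.a i => ((2 * i.val : ℕ) : ZMod 4)
  | QuaternionGroup.xa i => ((2 * i.val + 1 : ℕ) : ZMod 4)

/-- The cocycle `ω(a,b,c) = ζ^{val(a)·[val(b)+val(c) ≥ 4]}` on `ZMod 4`. -/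
def omegaDic {k : Type*} [Field k] (ζ : kˣ) (a b c : ZMod 4) : kˣ :=
  ζ ^ (a.val * (if 4 ≤ b.val + c.val then 1 else 0))

/-- The map `χ : ZMod 4 → k`, `χ(t) = q^{2·val(t)}`. -/
def chiDic {k : Type*} [Field k] (q : kˣ) (t : ZMod 4) : k := (q : k) ^ (2 * t.val)

theorem dic_add (p : ℕ) (hp : p.Prime) (i j : ZMod (2 * p)) :
    ((2 * (i + j).val : ℕ) : ZMod 4) = ((2 * i.val : ℕ) : ZMod 4) + ((2 * j.val : ℕ) : ZMod 4) := by
  have : NeZero (2 * p) := ⟨by have := hp.pos; omega⟩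
  rw [← Nat.cast_add, ZMod.natCast_eq_natCast_iff, ZMod.val_add, ← Nat.mul_add]
  have h : (i.val + j.val) % (2 * p) ≡ i.val + j.val [MOD 2] :=
    (Nat.mod_modEq _ _).of_mul_right p
  exact h.mul_left' 2

theorem dic_p (p : ℕ) (hp : p.Prime) (hodd : Odd p) :
    ((2 * ((p : ZMod (2 * p))).val : ℕ) : ZMod 4) = 2 := by
  have := hp.pos
  rw [ZMod.val_natCast, Nat.mod_eq_of_lt (by omega)]
  obtain ⟨m, rfl⟩ := hodd
  have : (4 : ZMod 4) = 0 := by decide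
  push_cast
  linear_combination (m : ZMod 4) * this

theorem dic_sub (p : ℕ) (hp : p.Prime) (i j : ZMod (2 * p)) :
    ((2 * (i - j).val : ℕ) : ZMod 4) = ((2 * i.val : ℕ) : ZMod 4) + ((2 * j.val : ℕ) : ZMod 4) := by
  have h := dic_add p hp (i - j) j
  rw [sub_add_cancel] at h
  have h4 : (4 : ZMod 4) = 0 := by decide
  rw [h]
  push_cast
  linear_combination (-(j.val : ZMod 4)) * h4

theorem dic_hom (p : ℕ) (hp : p.Prime) (hodd : Odd p) (x y : QuaternionGroup p) :
    dicProj p (x * y) = dicProj p x + dicProj p y := by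
  have h1 := dic_add p hp
  have h2 := dic_sub p hp
  have h3 := dic_p p hp hodd
  rcases x with i | i <;> rcases y with j | j
  · simp only [QuaternionGroup.a_mul_a, dicProj, h1]
  · simp only [QuaternionGroup.a_mul_xa, dicProj, Nat.cast_add, h2]
    ring
  · simp only [QuaternionGroup.xa_mul_a, dicProj, Nat.cast_add, h1]
    ring
  · simp only [QuaternionGroup.xa_mul_xa, dicProj, Nat.cast_add, h1, h2, h3]
    push_cast
    ring

theorem chi_formula {k : Type*} [Field k] (q : kˣ) (s t : ZMod 4) :
    chiDic q (s + t) = ((omegaDic (q ^ 4) s t 2 : kˣ) : k)⁻¹ * chiDic q t *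
      ((omegaDic (q ^ 4) s 2 t : kˣ) : k) * chiDic q s *
      ((omegaDic (q ^ 4) 2 s t : kˣ) : k)⁻¹ := by
  have e : omegaDic (q ^ 4) s 2 t = omegaDic (q ^ 4) s t 2 := by
    simp only [omegaDic, add_comm]
  have hne := (omegaDic (q ^ 4) s t 2).ne_zero
  have hne2 := (omegaDic (q ^ 4) 2 s t).ne_zero
  rw [e]
  have key : chiDic q (s + t) * ((omegaDic (q ^ 4) 2 s t : kˣ) : k) = chiDic q t * chiDic q s := by
    have hv : (2 : ZMod 4).val = 2 := rfl
    simp only [omegaDic, chiDic, ZMod.val_add, hv, Units.val_pow_eq_pow_val, ← pow_mul, ← pow_add]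
    have := s.val_lt
    have := t.val_lt
    congr 1
    split_ifs <;> omega
  field_simp
  rw [key]

/-- Example 6.5 (ex: quasi YD for dicyclic group): a quasi-Yetter–Drinfeld datum on the
group algebra of the dicyclic group `Dic_p` of order `4p`, `p` an odd prime, pulled
back along `π : Dic_p → C₄` from the datum `((kC₄, ω_ζ), c², χ)`. -/
theorem quasiYD_datum_dicyclic {k : Type*} [Field k]
    (p : ℕ) (hp : p.Prime) (hodd : Odd p)
    (q : kˣ) (hq : IsPrimitiveRoot q 16) :
    (∀ x y : QuaternionGroup p, dicProj p (x * y) = dicProj p x + dicProj p y) ∧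
    (dicProj p ((QuaternionGroup.a 1 : QuaternionGroup p) ^ p) = 2 ∧
      ∀ h : QuaternionGroup p,
        (QuaternionGroup.a 1 : QuaternionGroup p) ^ p * h =
          h * (QuaternionGroup.a 1 : QuaternionGroup p) ^ p) ∧
    (chiDic q (dicProj p 1) = 1 ∧
      ∀ h l : QuaternionGroup p,
        chiDic q (dicProj p (h * l)) =
          ((omegaDic (q ^ 4) (dicProj p h) (dicProj p l) 2 : k))⁻¹ *
            chiDic q (dicProj p l) *
            (omegaDic (q ^ 4) (dicProj p h) 2 (dicProj p l) : k) *
            chiDic q (dicProj p h) *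
            ((omegaDic (q ^ 4) 2 (dicProj p h) (dicProj p l) : k))⁻¹) := by
  have hz : (QuaternionGroup.a 1 : QuaternionGroup p) ^ p = QuaternionGroup.a (p : ZMod (2 * p)) :=
    QuaternionGroup.a_one_pow p
  have hpp : (p : ZMod (2 * p)) + p = 0 := by
    have := ZMod.natCast_self (2 * p)
    push_cast at this
    linear_combination this
  refine ⟨dic_hom p hp hodd, ⟨?_, ?_⟩, ?_, ?_⟩
  · rw [hz]
    exact dic_p p hp hodd
  · rw [hz]
    rintro (i | i)
    · simp only [QuaternionGroup.a_mul_a, add_comm]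
    · simp only [QuaternionGroup.a_mul_xa, QuaternionGroup.xa_mul_a]
      congr 1
      linear_combination -hpp
  · have h1 := dic_hom p hp hodd 1 1
    rw [mul_one] at h1
    have h0 : dicProj p 1 = 0 := by simpa using h1
    simp [h0, chiDic]
  · intro h l
    rw [dic_hom p hp hodd]
    exact chi_formula q _ _
end

section
/- Let k be a field, n ≥ 2, q ∈ k a primitive n²-th root of unity, and ζ := q^n. Define ω : (ZMod n²)³ → kˣ by ω(a,b,c) := ζ^{(val(a) mod n) · [(val(b) mod n) + (val(c) mod n) ≥ n]}, where val(x) ∈ {0, …, n²−1} is the canonical representative of x ∈ ZMod n², and define χ' : ZMod n² → k by χ'(t) := q^{val(t) mod n}. Then: (a) χ'(0) = 1 and the quasi-YD product formula holds for (ω, 1, χ'): for all a, b ∈ ZMod n², χ'(a+b) = ω(a,b,1)⁻¹ · χ'(b) · ω(a,1,b) · χ'(a) · ω(1,a,b)⁻¹; but (b) χ'(n·1) = 1 while χ'(1)^n = ζ ≠ 1; in particular χ'(n·t) ≠ χ'(t)^n in general. -/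
/-- The pullback cocycle `ω = ω_ζ ∘ φ^{⊗3}` on `ZMod n²`, where
`φ : ZMod n² → ZMod n` is the canonical projection and `ζ = q^n`. -/
def omegaPullback {k : Type*} [Field k] (n : ℕ) (q : kˣ) (a b c : ZMod (n ^ 2)) : kˣ :=
  (q ^ n) ^ ((a.val % n) * (if n ≤ b.val % n + c.val % n then 1 else 0))

/-- The function `χ' = χ ∘ φ` on `ZMod n²`, `χ'(t) = q^{val(t) mod n}`. -/
def chiPullback {k : Type*} [Field k] (n : ℕ) (q : kˣ) (t : ZMod (n ^ 2)) : k :=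
  (q : k) ^ (t.val % n)

/-- Example 6.6 (ex: phi): `((kC_{n²}, ω_ζ ∘ φ^{⊗3}), 𝔠, χ ∘ φ)` satisfies the quasi-YD
product formula, yet `χ'(n·1) = 1` while `χ'(1)^n = ζ ≠ 1`; so `χ(c^t) = χ(c)^t`
can fail for a quasi-YD datum whose reassociator is not of the form `ω_{ζ^w}`. -/
theorem pullback_quasiYD_datum_chi_power_fails {k : Type*} [Field k]
    (n : ℕ) (hn : 2 ≤ n) (q : kˣ) (hq : IsPrimitiveRoot q (n ^ 2)) :
    (chiPullback n q 0 = 1 ∧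
      ∀ a b : ZMod (n ^ 2),
        chiPullback n q (a + b) =
          ((omegaPullback n q a b 1 : k))⁻¹ * chiPullback n q b *
            (omegaPullback n q a 1 b : k) * chiPullback n q a *
            ((omegaPullback n q 1 a b : k))⁻¹) ∧
    (chiPullback n q ((n : ZMod (n ^ 2)) * 1) = 1 ∧
      chiPullback n q 1 ^ n = ((q ^ n : kˣ) : k) ∧ (q ^ n : kˣ) ≠ 1) := by
  have hn0 : 0 < n := by omega
  haveI : NeZero (n ^ 2) := ⟨by positivity⟩
  have hsq : n < n ^ 2 := by nlinarith
  haveI : Fact (1 < n ^ 2) := ⟨by omega⟩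
  have h1 : (1 : ZMod (n ^ 2)).val % n = 1 := by
    rw [ZMod.val_one, Nat.mod_eq_of_lt (by omega)]
  have hq0 : (q : k) ≠ 0 := q.ne_zero
  refine ⟨⟨by simp [chiPullback], ?_⟩, ?_, ?_, ?_⟩
  · intro a b
    have hsymm : omegaPullback n q a 1 b = omegaPullback n q a b 1 := by
      unfold omegaPullback
      rw [add_comm]
    have key : chiPullback n q (a + b) * (omegaPullback n q 1 a b : k)
        = chiPullback n q b * chiPullback n q a := by
      unfold chiPullback omegaPullback
      rw [h1, ZMod.val_add, Nat.mod_mod_of_dvd _ (dvd_pow_self n two_ne_zero), Nat.add_mod]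
      have ha := Nat.mod_lt a.val hn0
      have hb := Nat.mod_lt b.val hn0
      generalize a.val % n = x at *
      generalize b.val % n = y at *
      push_cast
      rw [← pow_mul, ← pow_add, ← pow_add]
      congr 1
      split_ifs with h
      · rw [Nat.mod_eq_sub_mod h, Nat.mod_eq_of_lt (by omega)]
        omega
      · rw [Nat.mod_eq_of_lt (by omega)]
        omega
    have hA : (omegaPullback n q a b 1 : k) ≠ 0 := Units.ne_zero _
    have hB : (omegaPullback n q 1 a b : k) ≠ 0 := Units.ne_zero _
    rw [hsymm, eq_mul_inv_iff_mul_eq₀ hB, key]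
    field_simp
  · rw [mul_one, chiPullback, ZMod.val_natCast, Nat.mod_eq_of_lt hsq, Nat.mod_self, pow_zero]
  · rw [chiPullback, h1, pow_one]
    push_cast
    rfl
  · exact hq.pow_ne_one_of_pos_of_lt (by omega) hsq
end

section
/- Let k be a field, p a prime, q ∈ k a primitive p²-th root of unity, and ζ := q^p. Let z, w, j, k', i be natural numbers with 1 ≤ z ≤ p−1, 1 ≤ w ≤ p−1, 0 ≤ j ≤ p−1, 0 ≤ k' ≤ p−1, and 1 ≤ i ≤ p−1. If ζ^{j·z} · q^{i·z²} = ζ^{k'·w} · q^{i·w²}, then either (z = w and j = k') or (z + w = p and p divides j + k' + 2·i). -/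
/-- The arithmetic dichotomy of Example 6.3 (ex: p(p-1) sq boson): if
`ζ^{j·z}·q^{i·z²} = ζ^{k'·w}·q^{i·w²}` with `ζ = q^p` and `q` a primitive `p²`-th root
of unity, then either `z = w` and `j = k'`, or `z + w = p` and `p ∣ j + k' + 2i`. -/
theorem bosonization_dichotomy {k : Type*} [Field k]
    (p : ℕ) (hp : p.Prime) (q : k) (hq : IsPrimitiveRoot q (p ^ 2))
    (z w j k' i : ℕ)
    (hz1 : 1 ≤ z) (hz2 : z ≤ p - 1) (hw1 : 1 ≤ w) (hw2 : w ≤ p - 1)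
    (hj : j ≤ p - 1) (hk : k' ≤ p - 1) (hi1 : 1 ≤ i) (hi2 : i ≤ p - 1)
    (heq : (q ^ p) ^ (j * z) * q ^ (i * z ^ 2) = (q ^ p) ^ (k' * w) * q ^ (i * w ^ 2)) :
    (z = w ∧ j = k') ∨ (z + w = p ∧ p ∣ j + k' + 2 * i) := by
  have hp0 : p ≠ 0 := hp.ne_zero
  have hpi : Prime (p : ℤ) := Nat.prime_iff_prime_int.mp hp
  have hpz : (p : ℤ) ≠ 0 := by exact_mod_cast hp0
  have h2 : 2 ≤ p := hp.two_le
  rw [← pow_mul, ← pow_mul, ← pow_add, ← pow_add] at heq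
  have hq0 : q ≠ 0 := hq.ne_zero (pow_ne_zero 2 hp0)
  have hd := (hq.zpow_eq_one_iff_dvd
    (((p * (j * z) + i * z ^ 2 : ℕ) : ℤ) - ((p * (k' * w) + i * w ^ 2 : ℕ) : ℤ))).mp (by
      rw [zpow_sub₀ hq0, zpow_natCast, zpow_natCast, heq]
      exact div_self (pow_ne_zero _ hq0))
  push_cast at hd
  obtain ⟨c, hc⟩ := hd
  have small : ∀ x : ℤ, (p : ℤ) ∣ x → |x| < p → x = 0 := fun x hx hl =>
    Int.eq_zero_of_abs_lt_dvd hx hl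
  have hzn : ¬ (p : ℤ) ∣ z := by
    intro h
    have := small _ h (by rw [abs_lt]; omega)
    omega
  have hin : ¬ (p : ℤ) ∣ i := by
    intro h
    have := small _ h (by rw [abs_lt]; omega)
    omega
  have h1 : (p : ℤ) ∣ i * ((z - w) * (z + w)) :=
    ⟨p * c - j * z + k' * w, by linear_combination hc⟩
  rcases hpi.dvd_or_dvd ((hpi.dvd_or_dvd h1).resolve_left hin) with h | h
  · left
    have hzw : z = w := by
      have := small _ h (by rw [abs_lt]; omega)
      omega
    subst hzw
    refine ⟨rfl, ?_⟩
    have h3 : (p : ℤ) ∣ z * (j - k') :=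
      ⟨c, mul_left_cancel₀ hpz (by linear_combination hc)⟩
    have := small _ ((hpi.dvd_or_dvd h3).resolve_left hzn) (by rw [abs_lt]; omega)
    omega
  · right
    have hs : z + w = p := by
      have h4 : (p : ℤ) ∣ z + w - p := dvd_sub_self_right.mpr h
      have := small _ h4 (by rw [abs_lt]; omega)
      omega
    refine ⟨hs, ?_⟩
    have hw : (w : ℤ) = p - z := by omega
    rw [hw] at hc
    have h3 : (p : ℤ) ∣ z * (j + k' + 2 * i) :=
      ⟨c + k' + i, mul_left_cancel₀ hpz (by linear_combination hc)⟩
    have := (hpi.dvd_or_dvd h3).resolve_left hzn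
    exact_mod_cast this
end
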